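/- arXiv:2312.15232 — 3 statements merged into one kernel-verified Lean document; each statement's English description precedes it below -/
import Mathlib

section
/- Let $R > 0$, $M > 0$, and define $u_0(z) = -\frac{2M}{\pi} \arg\left( \frac{R-z}{R+z} \right)$ for $z \in B^2(0,R)$, where $\arg$ denotes the principal argument. Then $u_0$ is a real-valued harmonic function on $B^2(0,R)$ with $|u_0(z)| \leq M$ for all $z \in B^2(0,R)$, $u_0(0) = 0$, and for every $r$ with $0 < r < R$, $u_0(i r) = \frac{2M}{\pi} \arctan\left( \frac{2rR}{R^2-r^2} \right)$; that is, equality holds in the harmonic Schwarz lemma estimate $\left| u(a+z) - \frac{R^2-|z|^2}{R^2+|z|^2} u(a) \right| \leq \frac{2M}{\pi}\arctan\left(\frac{2R|z|}{R^2-|z|^2}\right)$ with $a = 0$ and $z = ir$. -/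
open Metric Set

/-- A real-valued function `u` on a subset of `ℂ ≅ ℝ²` is harmonic if it is twice
continuously differentiable and satisfies the Laplace equation
`∂²u/∂x² + ∂²u/∂y² = 0`. -/
def IsHarmonicOn (u : ℂ → ℝ) (G : Set ℂ) : Prop :=
  ContDiffOn ℝ 2 u G ∧ ∀ z ∈ G,
    iteratedFDeriv ℝ 2 u z ![1, 1] + iteratedFDeriv ℝ 2 u z ![Complex.I, Complex.I] = 0

/-- The extremal function `u₀(z) = -(2M/π) arg((R-z)/(R+z))` of the harmonic Schwarz
lemma, where `arg` is the principal argument. -/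
noncomputable def u₀ (R M : ℝ) (z : ℂ) : ℝ :=
  -(2 * M / Real.pi) * Complex.arg ((R - z) / (R + z))

/-!
For `‖z‖ < ‖w‖` the quotient `(w - z) / (w + z)` lies in the right half-plane. There `arg` is the
imaginary part of the holomorphic `log`, so it is harmonic along holomorphic maps; it is bounded
by `π / 2`; and it equals `arctan (im / re)`, which gives
`u₀(z) = (2M/π) arctan(2R Im z / (R² - |z|²))` on the whole disk.
-/

open InnerProductSpace

theorem IsHarmonicOn.of_harmonicOnNhd {u : ℂ → ℝ} {G : Set ℂ} (hu : HarmonicOnNhd u G) :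
    IsHarmonicOn u G := by
  refine ⟨hu.contDiffOn, fun z hz ↦ ?_⟩
  have hΔ := (hu z hz).2.self_of_nhds
  rwa [laplacian_eq_iteratedFDeriv_complexPlane] at hΔ

theorem harmonicAt_arg_comp {f : ℂ → ℂ} {z : ℂ} (hf : AnalyticAt ℂ f z)
    (hz : f z ∈ Complex.slitPlane) : HarmonicAt (fun w ↦ (f w).arg) z := by
  simpa only [Complex.log_im] using (hf.clog hz).harmonicAt_im

theorem arg_eq_arctan_of_re_pos {z : ℂ} (hz : 0 < z.re) : z.arg = Real.arctan (z.im / z.re) := by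
  obtain ⟨h_lower, h_upper⟩ := abs_lt.1 (Complex.abs_arg_lt_pi_div_two_iff.2 (Or.inl hz))
  rw [← Complex.tan_arg, Real.arctan_tan h_lower h_upper]

theorem add_ne_zero_of_norm_lt {E : Type*} [SeminormedAddGroup E] {x y : E} (h : ‖y‖ < ‖x‖) :
    x + y ≠ 0 := fun h0 ↦
  h.ne' (by rw [eq_neg_of_add_eq_zero_left h0, norm_neg])

section SubDivAdd

theorem re_sub_div_add (w z : ℂ) :
    ((w - z) / (w + z)).re = (‖w‖ ^ 2 - ‖z‖ ^ 2) / ‖w + z‖ ^ 2 := by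
  simp only [Complex.div_re, ← Complex.normSq_eq_norm_sq, Complex.normSq_apply, Complex.add_re,
    Complex.add_im, Complex.sub_re, Complex.sub_im]
  ring

theorem im_sub_div_add (w z : ℂ) :
    ((w - z) / (w + z)).im = 2 * (w.im * z.re - w.re * z.im) / ‖w + z‖ ^ 2 := by
  simp only [Complex.div_im, ← Complex.normSq_eq_norm_sq, Complex.add_re, Complex.add_im,
    Complex.sub_re, Complex.sub_im]
  ring

variable {w z : ℂ}

theorem re_sub_div_add_pos (h : ‖z‖ < ‖w‖) : 0 < ((w - z) / (w + z)).re := by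
  have h_num : 0 < ‖w‖ ^ 2 - ‖z‖ ^ 2 := sub_pos.2 (by gcongr)
  have h_den : 0 < ‖w + z‖ := norm_pos_iff.2 (add_ne_zero_of_norm_lt h)
  rw [re_sub_div_add]
  positivity

theorem arg_sub_div_add (h : ‖z‖ < ‖w‖) :
    ((w - z) / (w + z)).arg =
      Real.arctan (2 * (w.im * z.re - w.re * z.im) / (‖w‖ ^ 2 - ‖z‖ ^ 2)) := by
  have h_den : ‖w + z‖ ^ 2 ≠ 0 := pow_ne_zero 2 (norm_ne_zero_iff.2 (add_ne_zero_of_norm_lt h))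
  rw [arg_eq_arctan_of_re_pos (re_sub_div_add_pos h), re_sub_div_add, im_sub_div_add,
    div_div_div_cancel_right₀ h_den]

theorem harmonicAt_arg_sub_div_add (h : ‖z‖ < ‖w‖) :
    HarmonicAt (fun ζ ↦ ((w - ζ) / (w + ζ)).arg) z :=
  harmonicAt_arg_comp
    ((analyticAt_const.sub analyticAt_id).div (analyticAt_const.add analyticAt_id)
      (add_ne_zero_of_norm_lt h))
    (Or.inl (re_sub_div_add_pos h))

end SubDivAdd

section Extremal

variable {R M : ℝ} {z : ℂ}

theorem norm_lt_norm_ofReal_of_mem_ball (hz : z ∈ ball (0 : ℂ) R) : ‖z‖ < ‖(R : ℂ)‖ := by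
  rw [Complex.norm_real]
  exact (mem_ball_zero_iff.1 hz).trans_le (Real.le_norm_self R)

theorem isHarmonicOn_u₀ (R M : ℝ) : IsHarmonicOn (u₀ R M) (ball (0 : ℂ) R) :=
  .of_harmonicOnNhd fun _ hz ↦
    (harmonicAt_arg_sub_div_add (norm_lt_norm_ofReal_of_mem_ball hz)).const_smul

theorem abs_u₀_le (hM : 0 ≤ M) (hz : z ∈ ball (0 : ℂ) R) : |u₀ R M z| ≤ M := by
  have h_re := re_sub_div_add_pos (norm_lt_norm_ofReal_of_mem_ball hz)
  have h_arg := Complex.abs_arg_le_pi_div_two_iff.2 h_re.le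
  calc |u₀ R M z| = 2 * M / Real.pi * |((R - z) / (R + z) : ℂ).arg| := by
        rw [u₀, abs_mul, abs_neg, abs_of_nonneg (by positivity)]
    _ ≤ 2 * M / Real.pi * (Real.pi / 2) := by gcongr
    _ = M := by field_simp

theorem u₀_eq_arctan (M : ℝ) (hz : z ∈ ball (0 : ℂ) R) :
    u₀ R M z = 2 * M / Real.pi * Real.arctan (2 * z.im * R / (R ^ 2 - ‖z‖ ^ 2)) := by
  rw [u₀, arg_sub_div_add (norm_lt_norm_ofReal_of_mem_ball hz), neg_mul, ← mul_neg,
    ← Real.arctan_neg, ← neg_div, Complex.ofReal_re, Complex.ofReal_im, Complex.norm_real,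
    Real.norm_eq_abs, sq_abs]
  ring_nf

end Extremal

/-- The function `u₀(z) = -(2M/π) arg((R-z)/(R+z))` is a real-valued harmonic function on
`B(0,R)`, bounded in absolute value by `M`, vanishing at `0`, and
`u₀(ir) = (2M/π) arctan(2rR/(R²-r²))` for `0 < r < R`; i.e. it attains equality in the
harmonic Schwarz lemma estimate at `a = 0`, `z = ir`. -/
theorem stmt_11 (R M : ℝ) (hR : 0 < R) (hM : 0 < M) :
    IsHarmonicOn (u₀ R M) (ball (0 : ℂ) R) ∧
    (∀ z ∈ ball (0 : ℂ) R, |u₀ R M z| ≤ M) ∧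
    u₀ R M 0 = 0 ∧
    ∀ r : ℝ, 0 < r → r < R →
      u₀ R M (Complex.I * r) = 2 * M / Real.pi * Real.arctan (2 * r * R / (R ^ 2 - r ^ 2)) := by
  refine ⟨isHarmonicOn_u₀ R M, fun z hz ↦ abs_u₀_le hM.le hz, ?_, fun r hr hrR ↦ ?_⟩
  · simp [u₀_eq_arctan M (mem_ball_self hR)]
  · have h_mem : Complex.I * r ∈ ball (0 : ℂ) R := by simpa [abs_of_pos hr] using hrR
    simp [u₀_eq_arctan M h_mem]
end

section
/- Let $\alpha < \beta$ be real numbers and let $u : \mathbb{B}^2 \to (\alpha, \beta)$ be a real-valued harmonic function on the unit disk. Then for every $z \in \mathbb{B}^2$, $|\nabla u(z)| \leq \frac{2(\beta-\alpha)}{\pi} \cdot \frac{1 - \frac{4}{(\beta-\alpha)^2}\left| u(z) - \frac{\alpha+\beta}{2} \right|^2}{1 - |z|^2}$. -/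
open Metric Set

/-!
Write `u = Re F` with `F` holomorphic and rescale so that `F` maps the disk into the strip
`|Re w| < π / 2`. Then `exp (i F)` maps the disk into the right half-plane, and the Schwarz–Pick
inequality there, divided by `|exp (i F)|`, gives `|F'| (1 - |z|²) ≤ 2 cos (Re F)`. The stated bound
follows from `cos (π t / 2) ≤ 1 - t²` on `[-1, 1]`.
-/

open scoped ComplexConjugate

theorem IsHarmonicOn.harmonicOnNhd {u : ℂ → ℝ} {G : Set ℂ} (hu : IsHarmonicOn u G)
    (hG : IsOpen G) : InnerProductSpace.HarmonicOnNhd u G := by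
  intro z hz
  refine ⟨hu.1.contDiffAt (hG.mem_nhds hz), ?_⟩
  filter_upwards [hG.mem_nhds hz] with w hw
  rw [InnerProductSpace.laplacian_eq_iteratedFDeriv_complexPlane]
  exact hu.2 w hw

theorem norm_fderiv_re_le_norm_deriv {F : ℂ → ℂ} {z : ℂ} (hF : DifferentiableAt ℂ F z) :
    ‖fderiv ℝ (fun w ↦ (F w).re) z‖ ≤ ‖deriv F z‖ := by
  have hasFDerivAt_re : HasFDerivAt (fun w ↦ (F w).re)
      (Complex.reCLM.comp ((fderiv ℂ F z).restrictScalars ℝ)) z :=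
    Complex.reCLM.hasFDerivAt.comp z (hF.hasFDerivAt.restrictScalars ℝ)
  rw [hasFDerivAt_re.fderiv, norm_deriv_eq_norm_fderiv]
  simpa using Complex.reCLM.opNorm_comp_le ((fderiv ℂ F z).restrictScalars ℝ)

theorem cos_pi_mul_div_two_le_one_sub_sq {t : ℝ} (ht : |t| ≤ 1) :
    Real.cos (Real.pi * t / 2) ≤ 1 - t ^ 2 := by
  wlog t_nonneg : 0 ≤ t generalizing t
  · simpa [neg_div] using this (t := -t) (by simpa using ht) (by linarith)
  have t_le_one : t ≤ 1 := (le_abs_self t).trans ht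
  have chord_le_sin : t * (√2 / 2) ≤ Real.sin (t * (Real.pi / 4)) := by
    simpa using strictConcaveOn_sin_Icc.concaveOn.2 (x := 0) (y := Real.pi / 4)
      ⟨le_rfl, Real.pi_pos.le⟩ ⟨by positivity, by linarith [Real.pi_pos]⟩
      (sub_nonneg.2 t_le_one) t_nonneg (by ring)
  calc Real.cos (Real.pi * t / 2)
      = 1 - 2 * Real.sin (t * (Real.pi / 4)) ^ 2 := by
        rw [show Real.pi * t / 2 = 2 * (t * (Real.pi / 4)) by ring, Real.cos_two_mul, Real.cos_sq']
        ring
    _ ≤ 1 - 2 * (t * (√2 / 2)) ^ 2 := by gcongr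
    _ = 1 - t ^ 2 := by
        rw [mul_pow, div_pow, Real.sq_sqrt zero_le_two]
        ring

section DiskMoebius

/-- For `z ∈ ball c R`, the Möbius transformation carrying the disk `ball 0 R` onto `ball c R` and
`0` to `z`. It moves the centre in the Schwarz lemma to an arbitrary point `z` of `ball c R`. -/
noncomputable def diskMoebius (c : ℂ) (R : ℝ) (z w : ℂ) : ℂ :=
  c + R ^ 2 * (w + (z - c)) / (R ^ 2 + conj (z - c) * w)

theorem sq_norm_sq_add_conj_mul_sub (R : ℝ) (a w : ℂ) :
    ‖(R : ℂ) ^ 2 + conj a * w‖ ^ 2 - R ^ 2 * ‖w + a‖ ^ 2 =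
      (R ^ 2 - ‖a‖ ^ 2) * (R ^ 2 - ‖w‖ ^ 2) := by
  simp only [← Complex.normSq_eq_norm_sq, Complex.normSq_apply, ← Complex.ofReal_pow,
    Complex.add_re, Complex.add_im, Complex.mul_re, Complex.mul_im, Complex.conj_re,
    Complex.conj_im, Complex.ofReal_re, Complex.ofReal_im]
  ring

theorem mul_norm_add_lt_norm_sq_add_conj_mul {R : ℝ} {a w : ℂ} (ha : ‖a‖ < R) (hw : ‖w‖ < R) :
    R * ‖w + a‖ < ‖(R : ℂ) ^ 2 + conj a * w‖ := by
  have sq_sub_pos {v : ℂ} (hv : ‖v‖ < R) : 0 < R ^ 2 - ‖v‖ ^ 2 :=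
    sub_pos.2 (pow_lt_pow_left₀ hv (norm_nonneg v) two_ne_zero)
  refine lt_of_pow_lt_pow_left₀ 2 (norm_nonneg _) ?_
  rw [mul_pow, ← sub_pos, sq_norm_sq_add_conj_mul_sub]
  exact mul_pos (sq_sub_pos ha) (sq_sub_pos hw)

variable {c z w : ℂ} {R : ℝ}

theorem diskMoebius_denom_ne_zero (hz : z ∈ ball c R) (hw : w ∈ ball 0 R) :
    (R : ℂ) ^ 2 + conj (z - c) * w ≠ 0 := by
  rw [← norm_pos_iff]
  have hR : 0 ≤ R := (pos_of_mem_ball hz).le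
  exact (by positivity : 0 ≤ R * ‖w + (z - c)‖).trans_lt
    (mul_norm_add_lt_norm_sq_add_conj_mul (mem_ball_iff_norm.1 hz) (mem_ball_zero_iff.1 hw))

theorem mapsTo_diskMoebius (hz : z ∈ ball c R) :
    MapsTo (diskMoebius c R z) (ball 0 R) (ball c R) := by
  intro w hw
  have hR : 0 < R := pos_of_mem_ball hz
  have norm_lt := mul_norm_add_lt_norm_sq_add_conj_mul
    (mem_ball_iff_norm.1 hz) (mem_ball_zero_iff.1 hw)
  rw [mem_ball_iff_norm, diskMoebius, add_sub_cancel_left, norm_div, norm_mul, norm_pow,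
    Complex.norm_real, Real.norm_of_nonneg hR.le,
    div_lt_iff₀ (norm_pos_iff.2 (diskMoebius_denom_ne_zero hz hw)), sq, mul_assoc]
  gcongr

theorem differentiableOn_diskMoebius (hz : z ∈ ball c R) :
    DifferentiableOn ℂ (diskMoebius c R z) (ball 0 R) :=
  (DifferentiableOn.fun_div (by fun_prop) (by fun_prop)
    fun _ hw ↦ diskMoebius_denom_ne_zero hz hw).const_add c

theorem diskMoebius_zero (hR : R ≠ 0) : diskMoebius c R z 0 = z := by
  simp [diskMoebius, hR]

theorem hasDerivAt_diskMoebius_zero (hR : R ≠ 0) :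
    HasDerivAt (diskMoebius c R z) (((R ^ 2 - ‖z - c‖ ^ 2) / R ^ 2 : ℝ) : ℂ) 0 := by
  have hR' : (R : ℂ) ≠ 0 := Complex.ofReal_ne_zero.2 hR
  have h := ((((hasDerivAt_id (0 : ℂ)).add_const (z - c)).const_mul ((R : ℂ) ^ 2)).div
    (((hasDerivAt_id (0 : ℂ)).const_mul (conj (z - c))).const_add ((R : ℂ) ^ 2))
    (by simp [hR])).const_add c
  refine h.congr_deriv ?_
  simp only [id_eq, mul_zero, add_zero, zero_add, mul_one]
  push_cast
  rw [← Complex.mul_conj']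
  field_simp

end DiskMoebius

theorem norm_deriv_le_of_mapsTo_ball_closedBall_apply {E : Type*} [NormedAddCommGroup E]
    [NormedSpace ℂ E] {f : ℂ → E} {c z : ℂ} {R r : ℝ} (hf : DifferentiableOn ℂ f (ball c R))
    (hmaps : MapsTo f (ball c R) (closedBall (f z) r)) (hz : z ∈ ball c R) :
    ‖deriv f z‖ ≤ r * R / (R ^ 2 - ‖z - c‖ ^ 2) := by
  have hR : 0 < R := pos_of_mem_ball hz
  have sq_sub_pos : 0 < R ^ 2 - ‖z - c‖ ^ 2 :=
    sub_pos.2 (pow_lt_pow_left₀ (mem_ball_iff_norm.1 hz) (norm_nonneg _) two_ne_zero)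
  have moebius_zero : diskMoebius c R z 0 = z := diskMoebius_zero hR.ne'
  have deriv_comp : deriv (f ∘ diskMoebius c R z) 0 =
      (((R ^ 2 - ‖z - c‖ ^ 2) / R ^ 2 : ℝ) : ℂ) • deriv f z := by
    have hfz : HasDerivAt f (deriv f z) (diskMoebius c R z 0) := by
      rw [moebius_zero]
      exact (hf.differentiableAt (isOpen_ball.mem_nhds hz)).hasDerivAt
    exact (hfz.scomp 0 (hasDerivAt_diskMoebius_zero hR.ne')).deriv
  have schwarz : ‖deriv (f ∘ diskMoebius c R z) 0‖ ≤ r / R := by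
    refine Complex.norm_deriv_le_div_of_mapsTo_ball
      (hf.comp (differentiableOn_diskMoebius hz) (mapsTo_diskMoebius hz)) ?_ hR
    rw [Function.comp_apply, moebius_zero]
    exact hmaps.comp (mapsTo_diskMoebius hz)
  rw [deriv_comp, norm_smul, Complex.norm_real, Real.norm_of_nonneg (by positivity)] at schwarz
  rw [le_div_iff₀ sq_sub_pos]
  calc ‖deriv f z‖ * (R ^ 2 - ‖z - c‖ ^ 2)
      = (R ^ 2 - ‖z - c‖ ^ 2) / R ^ 2 * ‖deriv f z‖ * R ^ 2 := by field_simp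
    _ ≤ r / R * R ^ 2 := by gcongr
    _ = r * R := by field_simp

section HalfPlane

variable {a b : ℂ}

theorem add_conj_ne_zero_of_re_pos (ha : 0 < a.re) (hb : 0 ≤ b.re) : b + conj a ≠ 0 := by
  intro h
  have re_eq_zero : b.re + a.re = 0 := by simpa using congrArg Complex.re h
  linarith

theorem norm_sub_div_add_conj_le_one (ha : 0 ≤ a.re) (hb : 0 ≤ b.re) :
    ‖(b - a) / (b + conj a)‖ ≤ 1 := by
  have sq_norm_sub : ‖b + conj a‖ ^ 2 - ‖b - a‖ ^ 2 = 4 * (a.re * b.re) := by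
    simp only [← Complex.normSq_eq_norm_sq, Complex.normSq_apply, Complex.add_re, Complex.add_im,
      Complex.sub_re, Complex.sub_im, Complex.conj_re, Complex.conj_im]
    ring
  rw [norm_div]
  refine div_le_one_of_le₀ (le_of_sq_le_sq ?_ (norm_nonneg _)) (norm_nonneg _)
  rw [← sub_nonneg, sq_norm_sub]
  positivity

end HalfPlane

section SchwarzPick

variable {c z : ℂ} {R : ℝ}

theorem norm_deriv_le_of_re_pos {g : ℂ → ℂ} (hg : DifferentiableOn ℂ g (ball c R))
    (hpos : ∀ w ∈ ball c R, 0 < (g w).re) (hz : z ∈ ball c R) :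
    ‖deriv g z‖ ≤ 2 * (g z).re * R / (R ^ 2 - ‖z - c‖ ^ 2) := by
  let cayley : ℂ → ℂ := fun w ↦ (g w - g z) / (g w + conj (g z))
  have re_pos := hpos z hz
  have denom_ne (w : ℂ) (hw : w ∈ ball c R) : g w + conj (g z) ≠ 0 :=
    add_conj_ne_zero_of_re_pos re_pos (hpos w hw).le
  have deriv_cayley : deriv cayley z = deriv g z / (2 * (g z).re : ℝ) := by
    have hgz := (hg.differentiableAt (isOpen_ball.mem_nhds hz)).hasDerivAt
    rw [((hgz.sub_const (g z)).fun_div (hgz.add_const (conj (g z))) (denom_ne z hz)).deriv,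
      ← Complex.add_conj]
    have := denom_ne z hz
    field_simp
    ring
  have schwarz : ‖deriv cayley z‖ ≤ 1 * R / (R ^ 2 - ‖z - c‖ ^ 2) := by
    refine norm_deriv_le_of_mapsTo_ball_closedBall_apply
      ((hg.sub_const _).fun_div (hg.add_const _) denom_ne) (fun w hw ↦ ?_) hz
    simpa [cayley] using norm_sub_div_add_conj_le_one re_pos.le (hpos w hw).le
  rw [deriv_cayley, norm_div, Complex.norm_real, Real.norm_of_nonneg (by positivity), one_mul,
    div_le_iff₀ (by positivity)] at schwarz
  exact schwarz.trans_eq (by ring)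

theorem norm_deriv_le_cos_re_of_abs_re_lt {F : ℂ → ℂ} (hF : DifferentiableOn ℂ F (ball c R))
    (hstrip : ∀ w ∈ ball c R, |(F w).re| < Real.pi / 2) (hz : z ∈ ball c R) :
    ‖deriv F z‖ ≤ 2 * Real.cos (F z).re * R / (R ^ 2 - ‖z - c‖ ^ 2) := by
  let g : ℂ → ℂ := fun w ↦ Complex.exp (Complex.I * F w)
  have re_g (w : ℂ) : (g w).re = ‖g w‖ * Real.cos (F w).re := by
    simp [g, Complex.exp_re, Complex.norm_exp]
  have norm_g_pos (w : ℂ) : 0 < ‖g w‖ := norm_pos_iff.2 (Complex.exp_ne_zero _)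
  have re_g_pos (w : ℂ) (hw : w ∈ ball c R) : 0 < (g w).re := by
    rw [re_g]
    exact mul_pos (norm_g_pos w) (Real.cos_pos_of_mem_Ioo (abs_lt.1 (hstrip w hw)))
  have norm_deriv_g : ‖deriv g z‖ = ‖g z‖ * ‖deriv F z‖ := by
    have hFz := (hF.differentiableAt (isOpen_ball.mem_nhds hz)).hasDerivAt
    simp [(hFz.const_mul Complex.I).cexp.deriv, g]
  have pick := norm_deriv_le_of_re_pos (hF.const_mul Complex.I).cexp re_g_pos hz
  refine le_of_mul_le_mul_left ?_ (norm_g_pos z)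
  rw [← norm_deriv_g]
  refine pick.trans_eq ?_
  rw [re_g]
  ring

end SchwarzPick

theorem norm_fderiv_le_cos_of_harmonicOnNhd {u : ℂ → ℝ} {c z : ℂ} {R α β : ℝ}
    (hu : InnerProductSpace.HarmonicOnNhd u (ball c R)) (hmaps : MapsTo u (ball c R) (Ioo α β))
    (hz : z ∈ ball c R) :
    ‖fderiv ℝ u z‖ ≤ 2 * (β - α) / Real.pi *
      (Real.cos (Real.pi / (β - α) * (u z - (α + β) / 2)) * R / (R ^ 2 - ‖z - c‖ ^ 2)) := by
  have width_pos : 0 < β - α := sub_pos.2 ((hmaps hz).1.trans (hmaps hz).2)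
  obtain ⟨F, hF, re_F⟩ := hu.exists_analyticOnNhd_ball_re_eq
  set k : ℝ := Real.pi / (β - α) with hk
  have k_pos : 0 < k := by positivity
  let G : ℂ → ℂ := fun w ↦ k * (F w - ((α + β) / 2 : ℝ))
  have re_G (w : ℂ) (hw : w ∈ ball c R) : (G w).re = k * (u w - (α + β) / 2) := by
    rw [Complex.re_ofReal_mul, Complex.sub_re, Complex.ofReal_re, ← re_F hw]
  have abs_re_G_lt (w : ℂ) (hw : w ∈ ball c R) : |(G w).re| < Real.pi / 2 := by
    obtain ⟨hα, hβ⟩ := hmaps hw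
    rw [re_G w hw, abs_mul, abs_of_pos k_pos,
      show Real.pi / 2 = k * ((β - α) / 2) by rw [hk]; field_simp]
    gcongr
    exact abs_lt.2 ⟨by linarith, by linarith⟩
  have norm_deriv_G : ‖deriv G z‖ = k * ‖deriv F z‖ := by
    simp [G, abs_of_pos k_pos]
  have pick := norm_deriv_le_cos_re_of_abs_re_lt
    ((hF.differentiableOn.sub_const _).const_mul (k : ℂ)) abs_re_G_lt hz
  rw [norm_deriv_G, re_G z hz] at pick
  have norm_fderiv_le : ‖fderiv ℝ u z‖ ≤ ‖deriv F z‖ := by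
    rw [← (re_F.eventuallyEq_of_mem (isOpen_ball.mem_nhds hz)).fderiv_eq]
    exact norm_fderiv_re_le_norm_deriv (hF z hz).differentiableAt
  refine norm_fderiv_le.trans (le_of_mul_le_mul_left (pick.trans_eq ?_) k_pos)
  rw [hk]
  field_simp

/-- Schwarz–Pick type gradient estimate: if `u : 𝔹² → (α, β)` is a real-valued harmonic
function on the unit disk, then for every `z ∈ 𝔹²`,
`|∇u(z)| ≤ (2(β-α)/π) · (1 - (4/(β-α)²)|u(z)-(α+β)/2|²)/(1-|z|²)`.
Here `|∇u(z)|` is the (operator, equivalently Euclidean) norm of the derivative of `u`. -/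
theorem stmt_12 (α β : ℝ) (hαβ : α < β) (u : ℂ → ℝ)
    (hu : IsHarmonicOn u (ball (0 : ℂ) 1))
    (hrange : ∀ z ∈ ball (0 : ℂ) 1, u z ∈ Ioo α β)
    (z : ℂ) (hz : z ∈ ball (0 : ℂ) 1) :
    ‖fderiv ℝ u z‖ ≤ 2 * (β - α) / Real.pi *
      ((1 - 4 / (β - α) ^ 2 * |u z - (α + β) / 2| ^ 2) / (1 - ‖z‖ ^ 2)) := by
  have width_pos : 0 < β - α := sub_pos.2 hαβ
  have one_sub_sq_pos : 0 < 1 - ‖z‖ ^ 2 :=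
    sub_pos.2 (pow_lt_one₀ (norm_nonneg z) (mem_ball_zero_iff.1 hz) two_ne_zero)
  set t : ℝ := 2 * (u z - (α + β) / 2) / (β - α) with ht
  have abs_t_le_one : |t| ≤ 1 := by
    obtain ⟨hα, hβ⟩ := hrange z hz
    rw [ht, abs_div, abs_of_pos width_pos, div_le_one width_pos, abs_le]
    constructor <;> linarith
  calc ‖fderiv ℝ u z‖
      ≤ 2 * (β - α) / Real.pi * (Real.cos (Real.pi * t / 2) / (1 - ‖z‖ ^ 2)) := by
        convert norm_fderiv_le_cos_of_harmonicOnNhd (hu.harmonicOnNhd isOpen_ball) hrange hz using 3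
        · rw [mul_one, ht]
          congr 1
          field_simp
        · simp
    _ ≤ 2 * (β - α) / Real.pi * ((1 - t ^ 2) / (1 - ‖z‖ ^ 2)) := by
        gcongr
        exact cos_pi_mul_div_two_le_one_sub_sq abs_t_le_one
    _ = _ := by
        rw [sq_abs, ht, div_pow, mul_pow]
        ring
end

section
/- Let $\alpha < \beta$ be real numbers and define $\ell(z) = \frac{\alpha+\beta}{2} + \frac{\beta-\alpha}{\pi} \arctan\left( \frac{2y}{1-x^2-y^2} \right)$ for $z = (x,y) \in \mathbb{B}^2$. Then $\ell$ is harmonic on the unit disk $\mathbb{B}^2$, satisfies $\alpha < \ell(z) < \beta$ for all $z \in \mathbb{B}^2$, and $|\nabla \ell(0)| = \frac{2(\beta-\alpha)}{\pi}$; in particular $\ell$ attains equality at $z = 0$ in the sharp gradient estimate $|\nabla u(z)| \leq \frac{2(\beta-\alpha)}{\pi} \cdot \frac{1 - \frac{4}{(\beta-\alpha)^2}|u(z)-\frac{\alpha+\beta}{2}|^2}{1-|z|^2}$. -/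
open Metric Set

/-- The extremal function `ℓ(z) = (α+β)/2 + ((β-α)/π) arctan(2y/(1-x²-y²))`, `z = x + iy`. -/
noncomputable def ell (α β : ℝ) (z : ℂ) : ℝ :=
  (α + β) / 2 + (β - α) / Real.pi * Real.arctan (2 * z.im / (1 - z.re ^ 2 - z.im ^ 2))

/-!
The Cayley transform `w = (1 + z) / (1 - z)` maps the unit disk onto the right half-plane, where
`arg w = arctan (Im w / Re w)`, and this quotient is `2y / (1 - x² - y²)`. Hence on the disk `ℓ` is
the imaginary part of the holomorphic function `i (α + β) / 2 + ((β - α) / π) log w`. It is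
therefore harmonic, and by the Cauchy–Riemann equations `|∇ℓ|` is the modulus of the complex
derivative, `2 |β - α| / (π |1 - z²|)`.
-/

section General

open scoped ComplexConjugate

theorem isHarmonicOn_of_harmonicOnNhd {u : ℂ → ℝ} {G : Set ℂ}
    (hu : InnerProductSpace.HarmonicOnNhd u G) : IsHarmonicOn u G := by
  refine ⟨hu.contDiffOn, fun z hz => ?_⟩
  have laplacian_zero := (hu z hz).2.eq_of_nhds
  rwa [InnerProductSpace.laplacian_eq_iteratedFDeriv_complexPlane] at laplacian_zero

theorem norm_imCLM_comp_smul_one (c : ℂ) :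
    ‖Complex.imCLM ∘L (c • (1 : ℂ →L[ℝ] ℂ))‖ = ‖c‖ := by
  set L := Complex.imCLM ∘L (c • (1 : ℂ →L[ℝ] ℂ))
  have hL (w : ℂ) : L w = (c * w).im := rfl
  refine L.opNorm_eq_of_bounds (norm_nonneg c) (fun w => ?_) fun N _ hN => ?_
  · rw [hL, ← norm_mul]
    exact Complex.abs_im_le_norm _
  · have attained : L (Complex.I * conj c) = ‖c‖ * ‖c‖ := by
      rw [hL, mul_left_comm, Complex.mul_conj, Complex.normSq_eq_norm_sq,
        Complex.im_mul_ofReal, Complex.I_im, one_mul, sq]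
    have bound : ‖c‖ * ‖c‖ ≤ N * ‖c‖ := by
      simpa [attained] using hN (Complex.I * conj c)
    rcases (norm_nonneg c).eq_or_lt with hc | hc
    · rwa [← hc]
    · exact le_of_mul_le_mul_right bound hc

theorem norm_fderiv_im_of_hasDerivAt {f : ℂ → ℂ} {c z : ℂ} (hf : HasDerivAt f c z) :
    ‖fderiv ℝ (fun w => (f w).im) z‖ = ‖c‖ := by
  have him : HasFDerivAt (fun w => (f w).im) (Complex.imCLM ∘L (c • (1 : ℂ →L[ℝ] ℂ))) z :=
    Complex.imCLM.hasFDerivAt.comp z hf.complexToReal_fderiv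
  rw [him.fderiv, norm_imCLM_comp_smul_one]

theorem arctan_im_div_re {w : ℂ} (hw : 0 < w.re) : Real.arctan (w.im / w.re) = w.arg := by
  have harg := abs_lt.1 (Complex.abs_arg_lt_pi_div_two_iff.2 (Or.inl hw))
  rw [← Complex.tan_arg, Real.arctan_tan harg.1 harg.2]

end General

/-- The Cayley transform, which maps the unit disk conformally onto the right half-plane. Its junk
value at the pole `z = 1` is `0`. -/
noncomputable def cayley (z : ℂ) : ℂ :=
  (1 + z) / (1 - z)

section Cayley

variable {z : ℂ}

theorem one_sub_ne_zero_of_norm_lt_one (hz : ‖z‖ < 1) : 1 - z ≠ 0 := by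
  rw [sub_ne_zero]
  rintro rfl
  exact hz.ne norm_one

theorem cayley_re (z : ℂ) :
    (cayley z).re = (1 - z.re ^ 2 - z.im ^ 2) / Complex.normSq (1 - z) := by
  simp only [cayley, Complex.div_re, Complex.add_re, Complex.sub_re, Complex.add_im,
    Complex.sub_im, Complex.one_re, Complex.one_im]
  ring

theorem cayley_im (z : ℂ) : (cayley z).im = 2 * z.im / Complex.normSq (1 - z) := by
  simp only [cayley, Complex.div_im, Complex.add_re, Complex.sub_re, Complex.add_im,
    Complex.sub_im, Complex.one_re, Complex.one_im]
  ring

theorem cayley_re_pos (hz : ‖z‖ < 1) : 0 < (cayley z).re := by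
  have hsq : ‖z‖ ^ 2 < 1 := pow_lt_one₀ (norm_nonneg z) hz two_ne_zero
  have hnum : 0 < 1 - z.re ^ 2 - z.im ^ 2 := by
    linarith [Complex.sq_norm_sub_sq_re z]
  rw [cayley_re]
  exact div_pos hnum (Complex.normSq_pos.2 (one_sub_ne_zero_of_norm_lt_one hz))

theorem cayley_im_div_re (hz : 1 - z ≠ 0) :
    (cayley z).im / (cayley z).re = 2 * z.im / (1 - z.re ^ 2 - z.im ^ 2) := by
  rw [cayley_im, cayley_re, div_div_div_cancel_right₀ (Complex.normSq_pos.2 hz).ne']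

theorem arg_cayley (hz : ‖z‖ < 1) :
    (cayley z).arg = Real.arctan (2 * z.im / (1 - z.re ^ 2 - z.im ^ 2)) := by
  rw [← arctan_im_div_re (cayley_re_pos hz),
    cayley_im_div_re (one_sub_ne_zero_of_norm_lt_one hz)]

theorem hasDerivAt_cayley (hz : 1 - z ≠ 0) : HasDerivAt cayley (2 / (1 - z) ^ 2) z := by
  have hdiv := ((hasDerivAt_id' z).const_add 1).fun_div ((hasDerivAt_id' z).const_sub 1) hz
  exact hdiv.congr_deriv (by ring)

theorem hasDerivAt_log_cayley (hz : ‖z‖ < 1) :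
    HasDerivAt (fun w => Complex.log (cayley w)) (2 / (1 - z ^ 2)) z := by
  have hsub := one_sub_ne_zero_of_norm_lt_one hz
  have hadd : 1 + z ≠ 0 := by
    simpa using one_sub_ne_zero_of_norm_lt_one ((norm_neg z).trans_lt hz)
  have hfactor : 1 - z ^ 2 = (1 + z) * (1 - z) := by ring
  refine ((hasDerivAt_cayley hsub).clog (Or.inl (cayley_re_pos hz))).congr_deriv ?_
  rw [cayley, hfactor]
  field_simp

end Cayley

/-- A holomorphic function on the unit disk with imaginary part `ell α β`. -/
noncomputable def ellPotential (α β : ℝ) (z : ℂ) : ℂ :=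
  ((α + β) / 2 : ℝ) * Complex.I + ((β - α) / Real.pi : ℝ) * Complex.log (cayley z)

section Ell

open scoped Topology

variable (α β : ℝ) {z : ℂ}

theorem hasDerivAt_ellPotential (hz : ‖z‖ < 1) :
    HasDerivAt (ellPotential α β) (((β - α) / Real.pi : ℝ) * (2 / (1 - z ^ 2))) z :=
  ((hasDerivAt_log_cayley hz).const_mul _).const_add _

theorem analyticAt_ellPotential (hz : ‖z‖ < 1) : AnalyticAt ℂ (ellPotential α β) z := by
  have hdiff : DifferentiableOn ℂ (ellPotential α β) (ball 0 1) := fun w hw =>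
    (hasDerivAt_ellPotential α β (mem_ball_zero_iff.1 hw)).differentiableAt.differentiableWithinAt
  exact hdiff.analyticAt (isOpen_ball.mem_nhds (mem_ball_zero_iff.2 hz))

theorem ell_eq_ellPotential_im (hz : ‖z‖ < 1) : ell α β z = (ellPotential α β z).im := by
  rw [ell, ellPotential, Complex.add_im, Complex.im_ofReal_mul, Complex.im_ofReal_mul,
    Complex.I_im, mul_one, Complex.log_im, arg_cayley hz]

theorem ell_eventuallyEq_ellPotential_im (hz : ‖z‖ < 1) :
    ell α β =ᶠ[𝓝 z] fun w => (ellPotential α β w).im := by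
  filter_upwards [isOpen_ball.mem_nhds (mem_ball_zero_iff.2 hz)] with w hw
  exact ell_eq_ellPotential_im α β (mem_ball_zero_iff.1 hw)

theorem harmonicOnNhd_ell : InnerProductSpace.HarmonicOnNhd (ell α β) (ball 0 1) := by
  intro z hz
  rw [mem_ball_zero_iff] at hz
  rw [InnerProductSpace.harmonicAt_congr_nhds (ell_eventuallyEq_ellPotential_im α β hz)]
  exact (analyticAt_ellPotential α β hz).harmonicAt_im

theorem norm_fderiv_ell (hz : ‖z‖ < 1) :
    ‖fderiv ℝ (ell α β) z‖ = 2 * |β - α| / (Real.pi * ‖1 - z ^ 2‖) := by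
  rw [(ell_eventuallyEq_ellPotential_im α β hz).fderiv_eq,
    norm_fderiv_im_of_hasDerivAt (hasDerivAt_ellPotential α β hz), norm_mul, norm_div,
    Complex.norm_real, Complex.norm_two, Real.norm_eq_abs, abs_div, abs_of_pos Real.pi_pos]
  ring

theorem ell_zero : ell α β 0 = (α + β) / 2 := by
  simp [ell]

variable {α β}

theorem ell_mem_Ioo (hαβ : α < β) (z : ℂ) : ell α β z ∈ Ioo α β := by
  have hscale : 0 < (β - α) / Real.pi := div_pos (sub_pos.2 hαβ) Real.pi_pos
  have hhalf : (β - α) / Real.pi * (Real.pi / 2) = (β - α) / 2 := by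
    field_simp
  unfold ell
  set t := 2 * z.im / (1 - z.re ^ 2 - z.im ^ 2)
  have hlower := mul_lt_mul_of_pos_left (Real.neg_pi_div_two_lt_arctan t) hscale
  have hupper := mul_lt_mul_of_pos_left (Real.arctan_lt_pi_div_two t) hscale
  constructor <;> linarith

end Ell

/-- The function `ℓ` is harmonic on the unit disk, takes values in `(α, β)`, and satisfies
`|∇ℓ(0)| = 2(β-α)/π`; in particular it attains equality at `z = 0` in the sharp gradient
estimate `|∇u(z)| ≤ (2(β-α)/π)(1-(4/(β-α)²)|u(z)-(α+β)/2|²)/(1-|z|²)`. -/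
theorem stmt_13 (α β : ℝ) (hαβ : α < β) :
    IsHarmonicOn (ell α β) (ball (0 : ℂ) 1) ∧
    (∀ z ∈ ball (0 : ℂ) 1, α < ell α β z ∧ ell α β z < β) ∧
    ‖fderiv ℝ (ell α β) 0‖ = 2 * (β - α) / Real.pi ∧
    ‖fderiv ℝ (ell α β) 0‖ = 2 * (β - α) / Real.pi *
      ((1 - 4 / (β - α) ^ 2 * |ell α β 0 - (α + β) / 2| ^ 2) / (1 - ‖(0 : ℂ)‖ ^ 2)) := by
  have hgrad : ‖fderiv ℝ (ell α β) 0‖ = 2 * (β - α) / Real.pi := by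
    simpa [abs_of_pos (sub_pos.2 hαβ)] using norm_fderiv_ell α β (z := 0) (by simp)
  refine ⟨isHarmonicOn_of_harmonicOnNhd (harmonicOnNhd_ell α β),
    fun z _ => ell_mem_Ioo hαβ z, hgrad, ?_⟩
  rw [hgrad, ell_zero]
  simp
end
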